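/- Let n ≥ 2 be an integer and set N = ⌊√n⌋. Let k, k0, k1 be positive integers with k ≤ N, k0 ≤ N, k1 ≤ N, k0 + k > N, and k1 + k > N (as holds when h0/k0, h/k, h1/k1 are three consecutive Farey fractions of order N), and set ϑ' := 1/(k(k0+k)) and ϑ'' := 1/(k(k1+k)). Let r > 0 be real, and for Φ ∈ ℝ write z = z(Φ) := k/n − ikΦ (so Re(z) = k/n > 0) and let z^{−1/2} denote the principal branch. Then ∫_{−ϑ'}^{ϑ''} z^{−1/2} · exp( 2πnz/k − πz/(4k) + πr/(kz) ) dΦ = (4 / (k^{1/2}·(8n−1)^{1/2})) · cosh( (π/k)·√(r(8n−1)) ) + E, where |E| ≤ √2·(1 + 6e^{2π(1+2r)})/(3n^{3/4}) + 2(2−√2)/(k·n^{1/4}). -/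

import Mathlib

open MeasureTheory intervalIntegral

/-!
Write `f z = z^(-1/2) exp (a² z + b² / z)`. Since `(a √z ± b / √z)² = a² z + b² / z ± 2ab`, an
entire primitive of `exp (z²)` composed with `a √z ± b / √z` yields an explicit primitive of `f`
on the slit plane. As `Re z → -∞` along horizontal lines, Gaussian integrals show that it tends to
`±i √π / a * cosh (2ab)`, the sign being that of `Im z`. Deforming the vertical segment into the two
horizontal half-lines ending at its endpoints therefore produces the main term exactly, and the
error is the integral of `f` over these half-lines, where `f` decays exponentially.
-/

section

open Complex Filter Set Topology
open scoped ComplexConjugate Real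

/-- The entire primitive of `z ↦ exp (z ^ 2)` vanishing at `0`, that is `√π / 2` times the imaginary
error function. -/
noncomputable def expSqPrimitive : ℂ → ℂ :=
  ((Differentiable.isExactOn_univ (f := fun z : ℂ ↦ exp (z ^ 2)) (by fun_prop)).with_val_at
    0 0).choose

lemma expSqPrimitive_zero : expSqPrimitive 0 = 0 :=
  ((Differentiable.isExactOn_univ (f := fun z : ℂ ↦ exp (z ^ 2)) (by fun_prop)).with_val_at
    0 0).choose_spec.1

lemma hasDerivAt_expSqPrimitive (z : ℂ) : HasDerivAt expSqPrimitive (exp (z ^ 2)) z :=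
  ((Differentiable.isExactOn_univ (f := fun z : ℂ ↦ exp (z ^ 2)) (by fun_prop)).with_val_at
    0 0).choose_spec.2 z (mem_univ z)

lemma expSqPrimitive_conj (z : ℂ) : expSqPrimitive (conj z) = conj (expSqPrimitive z) := by
  have hderiv (w : ℂ) :
      HasDerivAt (fun w ↦ expSqPrimitive w - conj (expSqPrimitive (conj w))) 0 w := by
    have hconj := (hasDerivAt_expSqPrimitive (conj w)).conj_conj
    rw [← exp_conj, map_pow, conj_conj] at hconj
    exact ((hasDerivAt_expSqPrimitive w).sub hconj).congr_deriv (sub_self _)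
  have hconst := is_const_of_deriv_eq_zero (fun w ↦ (hderiv w).differentiableAt)
    (fun w ↦ (hderiv w).deriv) (conj z) 0
  simpa [expSqPrimitive_zero, sub_eq_zero] using hconst

lemma expSqPrimitive_ofReal_mul_I (T : ℝ) :
    expSqPrimitive (T * I) = I * (∫ t in (0 : ℝ)..T, Real.exp (-1 * t ^ 2) : ℝ) := by
  have hderiv (t : ℝ) : HasDerivAt (fun t : ℝ ↦ expSqPrimitive (t * I))
      (I * (Real.exp (-1 * t ^ 2) : ℝ)) t := by
    refine ((hasDerivAt_expSqPrimitive (t * I)).comp t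
      ((hasDerivAt_id t).ofReal_comp.mul_const I)).congr_deriv ?_
    simp [mul_pow, mul_comm]
  have hFTC := integral_eq_sub_of_hasDerivAt (a := 0) (b := T) (fun t _ ↦ hderiv t)
    (Continuous.intervalIntegrable (by fun_prop) _ _)
  rw [intervalIntegral.integral_const_mul, intervalIntegral.integral_ofReal] at hFTC
  simpa [expSqPrimitive_zero] using hFTC.symm

lemma norm_expSqPrimitive_sub_le {z : ℂ} (hz : |z.re| ≤ 1) :
    ‖expSqPrimitive z - expSqPrimitive (z.im * I)‖ ≤ Real.exp 1 * |z.re| := by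
  have hstrip : Convex ℝ {w : ℂ | w.re ∈ Icc (-1 : ℝ) 1} :=
    (convex_Icc (-1 : ℝ) 1).linear_preimage reLm
  have hbound (w : ℂ) (hw : w ∈ {w : ℂ | w.re ∈ Icc (-1 : ℝ) 1}) :
      ‖exp (w ^ 2)‖ ≤ Real.exp 1 := by
    have hw1 : w.re ^ 2 ≤ 1 := (sq_le_one_iff_abs_le_one _).2 (abs_le.2 hw)
    rw [norm_exp, Real.exp_le_exp, pow_two, mul_re]
    nlinarith [sq_nonneg w.im]
  have hMVT := hstrip.norm_image_sub_le_of_norm_hasDerivWithin_le (x := z.im * I) (y := z)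
    (fun w _ ↦ (hasDerivAt_expSqPrimitive w).hasDerivWithinAt) hbound (by simp) (abs_le.1 hz)
  have hdiff : z - z.im * I = (z.re : ℂ) := sub_eq_of_eq_add (re_add_im z).symm
  rwa [hdiff, norm_real, Real.norm_eq_abs] at hMVT

lemma tendsto_expSqPrimitive {α : Type*} {l : Filter α} {v : α → ℂ}
    (hre : Tendsto (fun x ↦ (v x).re) l (𝓝 0)) (him : Tendsto (fun x ↦ (v x).im) l atTop) :
    Tendsto (fun x ↦ expSqPrimitive (v x)) l (𝓝 (I * (√π / 2 : ℝ))) := by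
  have himag : Tendsto (fun x ↦ expSqPrimitive ((v x).im * I)) l (𝓝 (I * (√π / 2 : ℝ))) := by
    simp_rw [expSqPrimitive_ofReal_mul_I]
    have hgauss := intervalIntegral_tendsto_integral_Ioi (μ := volume) 0
      (integrable_exp_neg_mul_sq one_pos).integrableOn tendsto_id
    rw [integral_gaussian_Ioi, div_one] at hgauss
    exact ((continuous_ofReal.tendsto _).comp (hgauss.comp him)).const_mul I
  have habs : Tendsto (fun x ↦ |(v x).re|) l (𝓝 0) := by simpa using hre.abs
  have hdiff : Tendsto (fun x ↦ expSqPrimitive (v x) - expSqPrimitive ((v x).im * I)) l (𝓝 0) := by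
    refine squeeze_zero_norm' ?_ (by simpa using habs.const_mul (Real.exp 1))
    filter_upwards [habs.eventually_le_const one_pos] with x hx
    exact norm_expSqPrimitive_sub_le hx
  simpa using hdiff.add himag

lemma sqrt_sq_eq_self (z : ℂ) : z.sqrt ^ 2 = z :=
  cpow_ofNat_inv_pow z 2

lemma sqrt_ne_zero_of_ne_zero {z : ℂ} (hz : z ≠ 0) : z.sqrt ≠ 0 :=
  fun h ↦ hz (by rw [← sqrt_sq_eq_self z, h, zero_pow two_ne_zero])

lemma sqrt_conj {z : ℂ} (hz : z ∈ slitPlane) : (conj z).sqrt = conj z.sqrt := by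
  rw [Complex.sqrt, conj_cpow z 2⁻¹ (mem_slitPlane_iff_arg.1 hz).1, map_inv₀, conj_ofNat,
    Complex.sqrt]

section HorizontalLimit

variable {y : ℝ}

lemma tendsto_im_sqrt_atBot (hy : 0 ≤ y) :
    Tendsto (fun u : ℝ ↦ (u + y * I : ℂ).sqrt.im) atBot atTop := by
  refine tendsto_atTop_mono (fun u ↦ ?_)
    (Real.tendsto_sqrt_atTop.comp tendsto_neg_atBot_atTop)
  have hnorm := (abs_le.1 (abs_re_le_norm (u + y * I : ℂ))).1
  have him : 0 ≤ (u + y * I : ℂ).im := by simpa using hy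
  rw [Complex.sqrt, cpow_inv_two_im_eq_sqrt him]
  refine Real.sqrt_le_sqrt ?_
  simp only [add_re, ofReal_re, re_ofReal_mul, I_re, mul_zero, add_zero] at hnorm ⊢
  linarith

lemma tendsto_re_sqrt_atBot (hy : 0 ≤ y) :
    Tendsto (fun u : ℝ ↦ (u + y * I : ℂ).sqrt.re) atBot (𝓝 0) := by
  have him := tendsto_im_sqrt_atBot hy
  refine (him.const_div_atTop (y / 2)).congr' ?_
  filter_upwards [him.eventually_gt_atTop 0] with u hu
  have hsq := congrArg im (sqrt_sq_eq_self (u + y * I))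
  simp only [pow_two, mul_im, add_im, ofReal_im, ofReal_re, I_im, mul_one, zero_mul, zero_add,
    add_zero] at hsq
  rw [div_eq_iff hu.ne']
  linarith

lemma tendsto_inv_sqrt_atBot (hy : 0 ≤ y) :
    Tendsto (fun u : ℝ ↦ (u + y * I : ℂ).sqrt⁻¹) atBot (𝓝 0) := by
  refine tendsto_inv₀_cobounded.comp (tendsto_norm_atTop_iff_cobounded.1 ?_)
  exact tendsto_atTop_mono (fun u ↦ (le_abs_self _).trans (abs_im_le_norm _))
    (tendsto_im_sqrt_atBot hy)

end HorizontalLimit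

/-- One of the two terms of `besselPrimitive`; its derivative carries the factor
`exp (a ^ 2 * z + b ^ 2 / z)` because `(a √z + b / √z) ^ 2 - 2ab = a ^ 2 * z + b ^ 2 / z`. -/
noncomputable def besselPrimitiveTerm (a b : ℝ) (z : ℂ) : ℂ :=
  exp (-(2 * a * b)) * expSqPrimitive (a * z.sqrt + b * z.sqrt⁻¹)

lemma hasDerivAt_besselPrimitiveTerm (a b : ℝ) {z : ℂ} (hz : z ∈ slitPlane) :
    HasDerivAt (besselPrimitiveTerm a b)
      ((a - b / z) / 2 * (z ^ (-(1 / 2) : ℂ) * exp ((a ^ 2 : ℝ) * z + (b ^ 2 : ℝ) / z))) z := by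
  have hz0 := slitPlane_ne_zero hz
  have hsqrt0 := sqrt_ne_zero_of_ne_zero hz0
  have hsqrt := Complex.hasDerivAt_sqrt hz
  rw [neg_div] at hsqrt
  have harg := (hsqrt.const_mul (a : ℂ)).add ((hsqrt.inv hsqrt0).const_mul (b : ℂ))
  have hexp : exp (-(2 * a * b)) * exp ((a * z.sqrt + b * z.sqrt⁻¹) ^ 2)
      = exp ((a ^ 2 : ℝ) * z + (b ^ 2 : ℝ) / z) := by
    rw [← exp_add]
    congr 1
    nth_rw 3 4 [← sqrt_sq_eq_self z]
    push_cast
    field_simp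
    ring
  refine (((hasDerivAt_expSqPrimitive _).comp z harg).const_mul
    (exp (-(2 * a * b)))).congr_deriv ?_
  simp only [Pi.add_apply, Pi.inv_apply]
  rw [← mul_assoc, hexp, sqrt_sq_eq_self]
  field_simp
  ring

lemma besselPrimitiveTerm_conj (a b : ℝ) {z : ℂ} (hz : z ∈ slitPlane) :
    besselPrimitiveTerm a b (conj z) = conj (besselPrimitiveTerm a b z) := by
  simp only [besselPrimitiveTerm, sqrt_conj hz, map_mul, map_add, map_neg, map_inv₀, conj_ofReal,
    conj_ofNat, ← expSqPrimitive_conj, ← exp_conj]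

lemma tendsto_besselPrimitiveTerm_atBot {a y : ℝ} (ha : 0 < a) (b : ℝ) (hy : 0 ≤ y) :
    Tendsto (fun u : ℝ ↦ besselPrimitiveTerm a b (u + y * I)) atBot
      (𝓝 (exp (-(2 * a * b)) * (I * (√π / 2 : ℝ)))) := by
  have hinv := tendsto_inv_sqrt_atBot hy
  have hinv_re := (continuous_re.tendsto _).comp hinv
  have hinv_im := (continuous_im.tendsto _).comp hinv
  refine (tendsto_expSqPrimitive ?_ ?_).const_mul _
  · simpa [Function.comp_def] using
      ((tendsto_re_sqrt_atBot hy).const_mul a).add (hinv_re.const_mul b)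
  · simpa [Function.comp_def] using
      ((tendsto_im_sqrt_atBot hy).const_mul_atTop ha).atTop_add (hinv_im.const_mul b)

/-- The integrand `z ^ (-1/2) * exp (A * z + B / z)`, whose integral along a Hankel contour is a
Bessel function of order `1/2`, up to elementary factors. -/
noncomputable def besselKernel (A B : ℝ) (z : ℂ) : ℂ :=
  z ^ (-(1 / 2) : ℂ) * exp (A * z + B / z)

lemma continuousOn_besselKernel (A B : ℝ) : ContinuousOn (besselKernel A B) slitPlane := by
  have hpow : ContinuousOn (fun z : ℂ ↦ z ^ (-(1 / 2) : ℂ)) slitPlane :=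
    continuousOn_id.cpow_const fun _ hz ↦ hz
  have hdiv : ContinuousOn (fun z : ℂ ↦ (B : ℂ) / z) slitPlane :=
    continuousOn_const.div continuousOn_id fun _ ↦ slitPlane_ne_zero
  exact hpow.mul ((continuousOn_const.mul continuousOn_id).add hdiv).cexp

lemma norm_besselKernel_le (A : ℝ) {B c δ : ℝ} {z : ℂ} (hB : 0 ≤ B) (hc : 0 ≤ c) (hδ : 0 < δ)
    (him : δ ≤ |z.im|) (hre : z.re ≤ c) :
    ‖besselKernel A B z‖ ≤ (√δ)⁻¹ * Real.exp (B * c / δ ^ 2) * Real.exp (A * z.re) := by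
  have hδz : δ ≤ ‖z‖ := him.trans (abs_im_le_norm z)
  have hpow : ‖z ^ (-(1 / 2) : ℂ)‖ ≤ (√δ)⁻¹ := by
    rw [show (-(1 / 2) : ℂ) = (-(1 / 2) : ℝ) by push_cast; rfl, norm_cpow_real,
      Real.rpow_neg (norm_nonneg z), ← Real.sqrt_eq_rpow]
    exact inv_anti₀ (Real.sqrt_pos.2 hδ) (Real.sqrt_le_sqrt hδz)
  have hdiv : ((B : ℂ) / z).re ≤ B * c / δ ^ 2 := by
    rw [div_eq_mul_inv, re_ofReal_mul, inv_re, normSq_eq_norm_sq, mul_div_assoc]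
    refine mul_le_mul_of_nonneg_left ?_ hB
    calc z.re / ‖z‖ ^ 2 ≤ c / ‖z‖ ^ 2 := by gcongr
      _ ≤ c / δ ^ 2 := by gcongr
  rw [besselKernel, norm_mul, norm_exp, add_re, re_ofReal_mul, mul_assoc, ← Real.exp_add]
  refine mul_le_mul hpow (Real.exp_le_exp.2 ?_) (Real.exp_nonneg _) (by positivity)
  linarith

/-- The primitive of `besselKernel (a ^ 2) (b ^ 2)`: in the sum of the two terms, the factors
`a ∓ b / z` in the derivatives add up to `2 * a`. -/
noncomputable def besselPrimitive (a b : ℝ) (z : ℂ) : ℂ :=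
  (besselPrimitiveTerm a b z + besselPrimitiveTerm a (-b) z) / a

section Primitive

variable {a : ℝ}

lemma hasDerivAt_besselPrimitive (ha : a ≠ 0) (b : ℝ) {z : ℂ} (hz : z ∈ slitPlane) :
    HasDerivAt (besselPrimitive a b) (besselKernel (a ^ 2) (b ^ 2) z) z := by
  have ha' : (a : ℂ) ≠ 0 := ofReal_ne_zero.2 ha
  refine (((hasDerivAt_besselPrimitiveTerm a b hz).add
    (hasDerivAt_besselPrimitiveTerm a (-b) hz)).div_const (a : ℂ)).congr_deriv ?_
  rw [neg_sq, ofReal_neg, ← besselKernel]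
  field_simp
  ring

lemma besselPrimitive_conj (a b : ℝ) {z : ℂ} (hz : z ∈ slitPlane) :
    besselPrimitive a b (conj z) = conj (besselPrimitive a b z) := by
  simp only [besselPrimitive, besselPrimitiveTerm_conj _ _ hz, map_div₀, map_add, conj_ofReal]

lemma tendsto_besselPrimitive_atBot_of_nonneg {y : ℝ} (ha : 0 < a) (b : ℝ) (hy : 0 ≤ y) :
    Tendsto (fun u : ℝ ↦ besselPrimitive a b (u + y * I)) atBot
      (𝓝 (I * (√π / a * Real.cosh (2 * a * b) : ℝ))) := by
  have hvalue : I * (√π / a * Real.cosh (2 * a * b) : ℝ)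
      = (exp (-(2 * a * b)) * (I * (√π / 2 : ℝ)) + exp (-(2 * a * (-b : ℝ))) * (I * (√π / 2 : ℝ)))
        / a := by
    rw [Real.cosh_eq]
    push_cast
    rw [mul_neg, neg_neg]
    ring
  rw [hvalue]
  exact ((tendsto_besselPrimitiveTerm_atBot ha b hy).add
    (tendsto_besselPrimitiveTerm_atBot ha (-b) hy)).div_const (a : ℂ)

lemma tendsto_besselPrimitive_atBot_of_neg {y : ℝ} (ha : 0 < a) (b : ℝ) (hy : y < 0) :
    Tendsto (fun u : ℝ ↦ besselPrimitive a b (u + y * I)) atBot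
      (𝓝 (-(I * (√π / a * Real.cosh (2 * a * b) : ℝ)))) := by
  have hlim := (continuous_conj.tendsto _).comp
    (tendsto_besselPrimitive_atBot_of_nonneg ha b (neg_nonneg.2 hy.le))
  rw [map_mul, conj_I, conj_ofReal, neg_mul] at hlim
  refine hlim.congr fun u ↦ ?_
  have hslit : (u + (-y : ℝ) * I : ℂ) ∈ slitPlane := by
    simpa [mem_slitPlane_iff] using Or.inr hy.ne
  rw [Function.comp_apply, ← besselPrimitive_conj a b hslit]
  simp

end Primitive

lemma norm_sub_le_of_hasDerivAt_of_norm_le_exp {E : Type*} [NormedAddCommGroup E]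
    [NormedSpace ℝ E] [CompleteSpace E] {F f : ℝ → E} {L : E} {A C c : ℝ} (hA : 0 < A)
    (hF : ∀ u ∈ Iic c, HasDerivAt F (f u) u) (hf : ContinuousOn f (Iic c))
    (hbound : ∀ u ∈ Iic c, ‖f u‖ ≤ C * Real.exp (A * u)) (hL : Tendsto F atBot (𝓝 L)) :
    ‖F c - L‖ ≤ C * Real.exp (A * c) / A := by
  have hexp : IntegrableOn (fun u : ℝ ↦ C * Real.exp (A * u)) (Iic c) :=
    (integrableOn_exp_mul_Iic hA c).const_mul C
  have hbound_ae : ∀ᵐ u ∂volume.restrict (Iic c), ‖f u‖ ≤ C * Real.exp (A * u) :=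
    (ae_restrict_iff' measurableSet_Iic).2 (Eventually.of_forall hbound)
  have hf_int : IntegrableOn f (Iic c) :=
    hexp.mono' (hf.aestronglyMeasurable measurableSet_Iic) hbound_ae
  rw [← integral_Iic_of_hasDerivAt_of_tendsto' hF hf_int hL]
  refine (norm_integral_le_of_norm_le hexp hbound_ae).trans_eq ?_
  rw [MeasureTheory.integral_const_mul, integral_exp_mul_Iic hA, mul_div_assoc]

section ContourDeformation

variable {a c : ℝ}

lemma norm_besselPrimitive_sub_le_of_tendsto {y δ : ℝ} {L : ℂ} (ha : 0 < a) (b : ℝ) (hc : 0 ≤ c)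
    (hδ : 0 < δ) (hy : δ ≤ |y|)
    (hL : Tendsto (fun u : ℝ ↦ besselPrimitive a b (u + y * I)) atBot (𝓝 L)) :
    ‖besselPrimitive a b (c + y * I) - L‖
      ≤ (√δ)⁻¹ * Real.exp (b ^ 2 * c / δ ^ 2) * Real.exp (a ^ 2 * c) / a ^ 2 := by
  have hslit (u : ℝ) : (u + y * I : ℂ) ∈ slitPlane := by
    simpa [mem_slitPlane_iff] using Or.inr (abs_pos.1 (hδ.trans_le hy))
  have hderiv (u : ℝ) : HasDerivAt (fun u : ℝ ↦ besselPrimitive a b (u + y * I))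
      (besselKernel (a ^ 2) (b ^ 2) (u + y * I)) u := by
    refine ((hasDerivAt_besselPrimitive ha.ne' b (hslit u)).comp u
      ((hasDerivAt_id u).ofReal_comp.add_const (y * I))).congr_deriv ?_
    rw [ofReal_one, mul_one]
  have hcont : Continuous fun u : ℝ ↦ besselKernel (a ^ 2) (b ^ 2) (u + y * I) :=
    (continuousOn_besselKernel _ _).comp_continuous (by fun_prop) hslit
  refine norm_sub_le_of_hasDerivAt_of_norm_le_exp (pow_pos ha 2) (fun u _ ↦ hderiv u)
    hcont.continuousOn (fun u hu ↦ ?_) hL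
  simpa using norm_besselKernel_le (a ^ 2) (z := u + y * I) (sq_nonneg b) hc hδ
    (by simpa using hy) (by simpa using hu)

lemma integral_besselKernel_eq_sub (ha : a ≠ 0) (b : ℝ) (hc : 0 < c) (t₀ t₁ : ℝ) :
    ∫ t : ℝ in t₀..t₁, besselKernel (a ^ 2) (b ^ 2) (c - I * t)
      = I * (besselPrimitive a b (c - I * t₁) - besselPrimitive a b (c - I * t₀)) := by
  have hslit (t : ℝ) : (c - I * t : ℂ) ∈ slitPlane := by
    simpa [mem_slitPlane_iff] using Or.inl hc
  have hderiv (t : ℝ) : HasDerivAt (fun t : ℝ ↦ I * besselPrimitive a b (c - I * t))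
      (besselKernel (a ^ 2) (b ^ 2) (c - I * t)) t := by
    refine (((hasDerivAt_besselPrimitive ha b (hslit t)).comp t
      (((hasDerivAt_id t).ofReal_comp.const_mul I).const_sub (c : ℂ))).const_mul I).congr_deriv ?_
    rw [ofReal_one]
    linear_combination -besselKernel (a ^ 2) (b ^ 2) (c - I * t) * I_sq
  have hcont : Continuous fun t : ℝ ↦ besselKernel (a ^ 2) (b ^ 2) (c - I * t) :=
    (continuousOn_besselKernel _ _).comp_continuous (by fun_prop) hslit
  rw [integral_eq_sub_of_hasDerivAt (fun t _ ↦ hderiv t) (hcont.intervalIntegrable _ _), mul_sub]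

lemma norm_integral_besselKernel_sub_le {δ t₀ t₁ : ℝ} (ha : 0 < a) (b : ℝ) (hc : 0 < c)
    (hδ : 0 < δ) (ht₀ : δ ≤ t₀) (ht₁ : δ ≤ t₁) :
    ‖(∫ t : ℝ in (-t₀)..t₁, besselKernel (a ^ 2) (b ^ 2) (c - I * t))
        - (2 * (√π / a * Real.cosh (2 * a * b)) : ℝ)‖
      ≤ 2 * ((√δ)⁻¹ * Real.exp (b ^ 2 * c / δ ^ 2) * Real.exp (a ^ 2 * c) / a ^ 2) := by
  have hupper := norm_besselPrimitive_sub_le_of_tendsto ha b hc.le hδ (ht₀.trans (le_abs_self t₀))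
    (tendsto_besselPrimitive_atBot_of_nonneg ha b (hδ.le.trans ht₀))
  have hlower := norm_besselPrimitive_sub_le_of_tendsto ha b hc.le hδ
    (ht₁.trans ((le_abs_self t₁).trans_eq (abs_neg t₁).symm))
    (tendsto_besselPrimitive_atBot_of_neg ha b (neg_neg_of_pos (hδ.trans_le ht₁)))
  rw [integral_besselKernel_eq_sub ha.ne' b hc]
  set M : ℝ := √π / a * Real.cosh (2 * a * b)
  have hdecomp : I * (besselPrimitive a b (c - I * t₁) - besselPrimitive a b (c - I * (-t₀ : ℝ)))
        - (2 * M : ℝ)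
      = I * ((besselPrimitive a b (c + (-t₁ : ℝ) * I) - -(I * M))
        - (besselPrimitive a b (c + t₀ * I) - I * M)) := by
    rw [show (c - I * t₁ : ℂ) = c + (-t₁ : ℝ) * I by push_cast; ring,
      show (c - I * (-t₀ : ℝ) : ℂ) = c + t₀ * I by push_cast; ring]
    push_cast
    linear_combination -2 * M * I_sq
  rw [hdecomp, norm_mul, norm_I, one_mul, two_mul]
  exact (norm_sub_le _ _).trans (add_le_add hlower hupper)

end ContourDeformation

section FareyArc

variable {n k r : ℝ}

lemma integral_fareyArc_eq_integral_besselKernel (hk : k ≠ 0) (n r ϑ₀ ϑ₁ : ℝ) :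
    ∫ Φ : ℝ in (-ϑ₀)..ϑ₁, ((k : ℂ) / n - I * k * Φ) ^ (-(1 / 2) : ℂ) *
        exp (2 * π * n * ((k : ℂ) / n - I * k * Φ) / k - π * ((k : ℂ) / n - I * k * Φ) / (4 * k)
          + π * r / (k * ((k : ℂ) / n - I * k * Φ)))
      = (k⁻¹ : ℝ) * ∫ t : ℝ in (-(k * ϑ₀))..(k * ϑ₁),
          besselKernel (π * (8 * n - 1) / (4 * k)) (π * r / k) ((k / n : ℝ) - I * t) := by
  have hsubst := integral_comp_mul_left (a := -ϑ₀) (b := ϑ₁)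
    (fun t : ℝ ↦ besselKernel (π * (8 * n - 1) / (4 * k)) (π * r / k) ((k / n : ℝ) - I * t)) hk
  rw [real_smul, mul_neg] at hsubst
  rw [← hsubst]
  refine intervalIntegral.integral_congr fun Φ _ ↦ ?_
  have hz : ((k / n : ℝ) : ℂ) - I * (k * Φ : ℝ) = (k : ℂ) / n - I * k * Φ := by
    push_cast
    ring
  simp only [hz, besselKernel]
  congr 2
  push_cast
  rw [div_div]
  field_simp
  ring

lemma fareyArc_mainTerm_eq (hn : 1 ≤ n) (hk : 0 < k) (hr : 0 ≤ r) :
    k⁻¹ * (2 * (√π / √(π * (8 * n - 1) / (4 * k)) *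
        Real.cosh (2 * √(π * (8 * n - 1) / (4 * k)) * √(π * r / k))))
      = 4 / (√k * √(8 * n - 1)) * Real.cosh (π / k * √(r * (8 * n - 1))) := by
  have h8n : 0 < 8 * n - 1 := by linarith
  have hsqrtA : √(π * (8 * n - 1) / (4 * k)) = √π * √(8 * n - 1) / (2 * √k) := by
    rw [Real.sqrt_div (by positivity), Real.sqrt_mul Real.pi_nonneg, Real.sqrt_mul zero_le_four,
      show (4 : ℝ) = 2 ^ 2 by norm_num, Real.sqrt_sq zero_le_two]
  have hsqrtB : √(π * r / k) = √π * √r / √k := by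
    rw [Real.sqrt_div (by positivity), Real.sqrt_mul Real.pi_nonneg]
  have hk_sq : √k ^ 2 = k := Real.sq_sqrt hk.le
  have hsqrt8n : √(8 * n - 1) ≠ 0 := (Real.sqrt_pos.2 h8n).ne'
  have hargument : 2 * (√π * √(8 * n - 1) / (2 * √k)) * (√π * √r / √k)
      = π / k * √(r * (8 * n - 1)) := by
    rw [Real.sqrt_mul hr]
    field_simp
    rw [Real.sq_sqrt Real.pi_nonneg, hk_sq]
    ring
  rw [hsqrtA, hsqrtB, hargument]
  field_simp
  rw [hk_sq]
  ring

lemma inv_sqrt_one_div_two_mul_sqrt (hn : 0 ≤ n) :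
    (√(1 / (2 * √n)))⁻¹ = √2 * n ^ ((1 : ℝ) / 4) := by
  rw [one_div, Real.sqrt_inv, inv_inv, Real.sqrt_mul zero_le_two, Real.sqrt_eq_rpow √n,
    Real.sqrt_eq_rpow n, ← Real.rpow_mul hn]
  norm_num

lemma fareyArc_tails_le (hn : 1 ≤ n) (hk : 0 < k) :
    k⁻¹ * (2 * ((√(1 / (2 * √n)))⁻¹ * Real.exp (π * r / k * (k / n) / (1 / (2 * √n)) ^ 2) *
        Real.exp (π * (8 * n - 1) / (4 * k) * (k / n)) / (π * (8 * n - 1) / (4 * k))))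
      ≤ 2 * √2 * Real.exp (2 * π * (1 + 2 * r)) / n ^ ((3 : ℝ) / 4) := by
  have hn0 : 0 < n := one_pos.trans_le hn
  have h8n : 0 < 8 * n - 1 := by linarith
  set E := Real.exp (2 * π * (1 + 2 * r))
  set p := n ^ ((3 : ℝ) / 4)
  set q := n ^ ((1 : ℝ) / 4)
  have hp : 0 < p := Real.rpow_pos_of_pos hn0 _
  have hq : 0 < q := Real.rpow_pos_of_pos hn0 _
  have hpq : p * q = n := by
    rw [← Real.rpow_add hn0]
    norm_num
  have hexp : Real.exp (π * r / k * (k / n) / (1 / (2 * √n)) ^ 2) *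
      Real.exp (π * (8 * n - 1) / (4 * k) * (k / n)) ≤ E := by
    have hB : π * r / k * (k / n) / (1 / (2 * √n)) ^ 2 = 4 * π * r := by
      rw [div_pow, mul_pow, Real.sq_sqrt hn0.le]
      field_simp
      norm_num
    have hA : π * (8 * n - 1) / (4 * k) * (k / n) = 2 * π - π / (4 * n) := by
      field_simp
      ring
    have : 0 < π / (4 * n) := by positivity
    rw [hA, hB, ← Real.exp_add, Real.exp_le_exp]
    linarith
  have hratio : 8 * q / (π * (8 * n - 1)) ≤ 2 / p := by
    rw [div_le_div_iff₀ (by positivity) hp]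
    nlinarith [Real.pi_gt_three]
  rw [inv_sqrt_one_div_two_mul_sqrt hn0.le, mul_assoc (√2 * q)]
  calc _ ≤ k⁻¹ * (2 * (√2 * q * E / (π * (8 * n - 1) / (4 * k)))) := by gcongr
    _ = √2 * E * (8 * q / (π * (8 * n - 1))) := by
      field_simp
      ring
    _ ≤ √2 * E * (2 / p) := by gcongr
    _ = 2 * √2 * E / p := by ring

end FareyArc

theorem farey_arc_bessel_integral_general {n k r ϑ₀ ϑ₁ : ℝ} (hn : 1 ≤ n) (hk : 0 < k)
    (hr : 0 ≤ r) (hϑ₀ : 1 / (2 * k * √n) ≤ ϑ₀) (hϑ₁ : 1 / (2 * k * √n) ≤ ϑ₁) :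
    ‖(∫ Φ : ℝ in (-ϑ₀)..ϑ₁, ((k : ℂ) / n - I * k * Φ) ^ (-(1 / 2) : ℂ) *
        exp (2 * π * n * ((k : ℂ) / n - I * k * Φ) / k - π * ((k : ℂ) / n - I * k * Φ) / (4 * k)
          + π * r / (k * ((k : ℂ) / n - I * k * Φ))))
      - ((4 / (√k * √(8 * n - 1)) * Real.cosh (π / k * √(r * (8 * n - 1))) : ℝ) : ℂ)‖
      ≤ 2 * √2 * Real.exp (2 * π * (1 + 2 * r)) / n ^ ((3 : ℝ) / 4) := by
  have hn0 : 0 < n := one_pos.trans_le hn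
  have hA : 0 < π * (8 * n - 1) / (4 * k) := by
    have : 0 < 8 * n - 1 := by linarith
    positivity
  have hB : 0 ≤ π * r / k := by positivity
  have hheight {ϑ : ℝ} (hϑ : 1 / (2 * k * √n) ≤ ϑ) : 1 / (2 * √n) ≤ k * ϑ := by
    rw [← div_le_iff₀' hk, div_div, mul_right_comm]
    exact hϑ
  have hsegment := norm_integral_besselKernel_sub_le (Real.sqrt_pos.2 hA) √(π * r / k)
    (div_pos hk hn0) (by positivity : 0 < 1 / (2 * √n)) (hheight hϑ₀) (hheight hϑ₁)
  rw [Real.sq_sqrt hA.le, Real.sq_sqrt hB] at hsegment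
  rw [integral_fareyArc_eq_integral_besselKernel hk.ne', ← fareyArc_mainTerm_eq hn hk hr,
    ofReal_mul k⁻¹, ← mul_sub, norm_mul, norm_real, Real.norm_of_nonneg (inv_nonneg.2 hk.le)]
  exact (mul_le_mul_of_nonneg_left hsegment (inv_nonneg.2 hk.le)).trans (fareyArc_tails_le hn hk)

lemma one_div_two_mul_mul_sqrt_le {n k m : ℕ} (hk : 0 < k) (hkn : k ≤ n.sqrt) (hmn : m ≤ n.sqrt) :
    1 / (2 * k * √n) ≤ 1 / ((k : ℝ) * (m + k)) := by
  have hk' : (k : ℝ) ≤ √n := (Nat.cast_le.2 hkn).trans Real.nat_sqrt_le_real_sqrt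
  have hm' : (m : ℝ) ≤ √n := (Nat.cast_le.2 hmn).trans Real.nat_sqrt_le_real_sqrt
  rw [mul_comm 2, mul_assoc]
  gcongr
  linarith

lemma two_mul_sqrt_two_mul_div_le {p d : ℝ} (hp : 0 ≤ p) (hd : 0 ≤ d) (E : ℝ) :
    2 * √2 * E / p ≤ √2 * (1 + 6 * E) / (3 * p) + 2 * (2 - √2) / d := by
  have hsqrt : √2 ≤ 2 := Real.sqrt_le_left zero_le_two |>.2 (by norm_num)
  have hfirst : √2 * (1 + 6 * E) / (3 * p) = √2 / (3 * p) + 2 * √2 * E / p := by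
    rw [mul_add, add_div, mul_one, ← mul_div_mul_left (2 * √2 * E) p three_ne_zero]
    ring
  have hsecond : 0 ≤ 2 * (2 - √2) / d := div_nonneg (by linarith) hd
  have : 0 ≤ √2 / (3 * p) := by positivity
  linarith

end

/-- Evaluation, with explicit error bound, of the integral
`∫_{−ϑ'}^{ϑ''} z^{−1/2} exp(2πnz/k − πz/(4k) + πr/(kz)) dΦ`, where
`z = k/n − ikΦ`, `ϑ' = 1/(k(k₀+k))`, `ϑ'' = 1/(k(k₁+k))`, and
`h₀/k₀, h/k, h₁/k₁` are consecutive Farey fractions of order `N = ⌊√n⌋`. -/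
theorem farey_arc_bessel_integral (n : ℕ) (hn : 2 ≤ n) (N : ℕ) (hN : N = Nat.sqrt n)
    (k k₀ k₁ : ℕ) (hk : 0 < k) (hk₀ : 0 < k₀) (hk₁ : 0 < k₁)
    (hkN : k ≤ N) (hk₀N : k₀ ≤ N) (hk₁N : k₁ ≤ N)
    (hsum₀ : N < k₀ + k) (hsum₁ : N < k₁ + k)
    (r : ℝ) (hr : 0 < r) :
    ‖(∫ Φ : ℝ in (-(1 / ((k : ℝ) * ((k₀ : ℝ) + (k : ℝ)))))..(1 / ((k : ℝ) * ((k₁ : ℝ) + (k : ℝ)))),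
        ((k : ℂ) / (n : ℂ) - Complex.I * (k : ℂ) * (Φ : ℂ)) ^ (-(1 / 2) : ℂ) *
          Complex.exp
            (2 * (Real.pi : ℂ) * (n : ℂ) * ((k : ℂ) / (n : ℂ) - Complex.I * (k : ℂ) * (Φ : ℂ)) / (k : ℂ)
              - (Real.pi : ℂ) * ((k : ℂ) / (n : ℂ) - Complex.I * (k : ℂ) * (Φ : ℂ)) / (4 * (k : ℂ))
              + (Real.pi : ℂ) * (r : ℂ) /
                  ((k : ℂ) * ((k : ℂ) / (n : ℂ) - Complex.I * (k : ℂ) * (Φ : ℂ)))))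
      - ((4 / (Real.sqrt k * Real.sqrt (8 * (n : ℝ) - 1)) *
            Real.cosh (Real.pi / (k : ℝ) * Real.sqrt (r * (8 * (n : ℝ) - 1))) : ℝ) : ℂ)‖
    ≤ Real.sqrt 2 * (1 + 6 * Real.exp (2 * Real.pi * (1 + 2 * r))) / (3 * (n : ℝ) ^ ((3 : ℝ) / 4))
      + 2 * (2 - Real.sqrt 2) / ((k : ℝ) * (n : ℝ) ^ ((1 : ℝ) / 4)) := by
  subst hN
  simpa only [Complex.ofReal_natCast] using
    (farey_arc_bessel_integral_general (n := n) (k := k) (by exact_mod_cast one_le_two.trans hn)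
      (Nat.cast_pos.2 hk) hr.le (one_div_two_mul_mul_sqrt_le hk hkN hk₀N)
      (one_div_two_mul_mul_sqrt_le hk hkN hk₁N)).trans
      (two_mul_sqrt_two_mul_div_le (by positivity) (by positivity) _)
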